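/- arXiv:2501.11277 — 4 statements merged into one kernel-verified Lean document; each statement's English description precedes it below -/
import Mathlib

section
/- Let p be a prime and F a perfect field of characteristic ≠ p containing all p-power roots of unity, and let Δ be a finitely generated subgroup of F^× with torsion subgroup Δ_tor. Then Gal(F(Δ^{1/p^∞})/F) is isomorphic to Z_p^d for some d ≤ rank(Δ/Δ_tor). -/
/-- A compact group embedding continuously in `ℤ_p ^ m` is isomorphic to `ℤ_p ^ d`, `d ≤ m`. -/
theorem exists_mulEquiv_padicInt_pi_of_injective (p : ℕ) [Fact p.Prime] {G : Type*} [Group G]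
    [TopologicalSpace G] [CompactSpace G] (m : ℕ)
    (f : G →* Multiplicative (Fin m → ℤ_[p])) (hf : Continuous f)
    (hinj : Function.Injective f) :
    ∃ d : ℕ, d ≤ m ∧ ∃ φ : G ≃* Multiplicative (Fin d → ℤ_[p]),
      Continuous φ ∧ Continuous φ.symm := by
  have hclosed : IsClosed {v : Fin m → ℤ_[p] | Multiplicative.ofAdd v ∈ f.range} := by
    have h := (isCompact_range hf).isClosed
    exact h.preimage continuous_ofAdd
  let N : Submodule ℤ_[p] (Fin m → ℤ_[p]) :=
    { carrier := {v | Multiplicative.ofAdd v ∈ f.range}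
      add_mem' := fun {a b} ha hb => by
        exact f.range.mul_mem ha hb
      zero_mem' := one_mem f.range
      smul_mem' := fun c v hv => by
        refine PadicInt.denseRange_natCast.induction_on
          (p := fun c : ℤ_[p] => c • v ∈ {v | Multiplicative.ofAdd v ∈ f.range}) c
          (hclosed.preimage (by fun_prop)) fun k => ?_
        have := f.range.pow_mem (x := Multiplicative.ofAdd v) hv k
        rw [← ofAdd_nsmul] at this
        rwa [Set.mem_ofPred_eq, Nat.cast_smul_eq_nsmul] }
  obtain ⟨d, ⟨b⟩⟩ := N.nonempty_basis_of_pid (Pi.basisFun ℤ_[p] (Fin m))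
  have hd : d ≤ m := by
    have h := Submodule.finrank_le N
    rwa [Module.finrank_eq_card_basis b, Module.finrank_eq_card_basis
      (Pi.basisFun ℤ_[p] (Fin m)), Fintype.card_fin, Fintype.card_fin] at h
  let e₁ : G ≃* Multiplicative N :=
    MulEquiv.ofBijective
      (MonoidHom.mk' (fun g => Multiplicative.ofAdd
          (⟨(f g).toAdd, ⟨g, rfl⟩⟩ : N)) fun a b => by
        apply Multiplicative.toAdd.injective
        apply Subtype.ext
        simp)
      ⟨fun a b h => hinj (by
          have := congrArg (fun x => (Multiplicative.toAdd x : N).1) h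
          exact Multiplicative.toAdd.injective this),
        fun y => by
          obtain ⟨g, hg⟩ := (Multiplicative.toAdd y : N).2
          exact ⟨g, Multiplicative.toAdd.injective (Subtype.ext (congrArg Multiplicative.toAdd hg))⟩⟩
  have he₁ : Continuous e₁ :=
    continuous_ofAdd.comp ((continuous_toAdd.comp hf).subtype_mk _)
  let e₂ : Multiplicative (Fin d → ℤ_[p]) ≃* Multiplicative N :=
    AddEquiv.toMultiplicative b.equivFun.symm.toAddEquiv
  have he₂ : Continuous e₂ :=
    continuous_ofAdd.comp
      ((b.equivFun.symm.toLinearMap.continuous_on_pi).comp continuous_toAdd)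
  have he₁' : Continuous e₁.symm :=
    Continuous.continuous_symm_of_equiv_compact_to_t2 (f := e₁.toEquiv) he₁
  have he₂' : Continuous e₂.symm :=
    Continuous.continuous_symm_of_equiv_compact_to_t2 (f := e₂.toEquiv) he₂
  exact ⟨d, hd, e₁.trans e₂.symm, he₂'.comp he₁, he₁'.comp he₂⟩

/-- The `p`-adic integer `x` is the Kummer cocycle of `d` at `σ`, relative to the compatible
system `ζ` of roots of unity. -/
def IsKummerExponent {p : ℕ} [Fact p.Prime] {F L : Type*} [Field F] [Field L] [Algebra F L]
    (ζ : ℕ → F) (d : ℕ → L) (σ : L ≃ₐ[F] L) (x : ℤ_[p]) : Prop :=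
  ∀ n k : ℕ, PadicInt.toZModPow n x = k → σ (d n) = algebraMap F L (ζ n ^ k) * d n

theorem pow_prime_pow_eq_zeroth {M : Type*} [Monoid M] {p : ℕ} {d : ℕ → M}
    (hd : ∀ n, d (n + 1) ^ p = d n) (n : ℕ) : d n ^ p ^ n = d 0 := by
  induction n with
  | zero => simp
  | succ n ih => rw [pow_succ', pow_mul, hd, ih]

section Kummer

variable {p : ℕ} [Fact p.Prime] {F L : Type*} [Field F] [Field L] [Algebra F L]
  {ζ : ℕ → F} {d : ℕ → L}

theorem ne_zero_of_pow_prime_eq (hd : ∀ n, d (n + 1) ^ p = d n) (h0 : d 0 ≠ 0) (n : ℕ) :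
    d n ≠ 0 := by
  intro h
  have := pow_prime_pow_eq_zeroth hd n
  rw [h, zero_pow (pow_ne_zero _ (Fact.out : p.Prime).ne_zero)] at this
  exact h0 this.symm

theorem pow_eq_pow_iff_natCast_zmod (hζ : ∀ n, IsPrimitiveRoot (ζ n) (p ^ n)) (n k l : ℕ) :
    ζ n ^ k = ζ n ^ l ↔ (k : ZMod (p ^ n)) = l := by
  have hu := (hζ n).isUnit (pow_ne_zero _ (Fact.out : p.Prime).ne_zero)
  rw [ZMod.natCast_eq_natCast_iff, (hζ n).eq_orderOf]
  lift ζ n to Fˣ using hu with u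
  rw [orderOf_units, ← pow_eq_pow_iff_modEq, ← Units.val_inj, Units.val_pow_eq_pow_val,
    Units.val_pow_eq_pow_val]

theorem exists_isKummerExponent (hζ : ∀ n, IsPrimitiveRoot (ζ n) (p ^ n))
    (hζp : ∀ n, ζ (n + 1) ^ p = ζ n) (hd : ∀ n, d (n + 1) ^ p = d n) (h0 : d 0 ≠ 0)
    (hd0 : d 0 ∈ (algebraMap F L).range) (σ : L ≃ₐ[F] L) :
    ∃ x : ℤ_[p], IsKummerExponent ζ d σ x := by
  have hne := ne_zero_of_pow_prime_eq hd h0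
  have hk : ∀ n, ∃ k : ℕ, σ (d n) = algebraMap F L (ζ n ^ k) * d n := by
    intro n
    have hprim := (hζ n).map_of_injective (algebraMap F L).injective
    have : NeZero (p ^ n) := ⟨pow_ne_zero _ (Fact.out : p.Prime).ne_zero⟩
    obtain ⟨k, -, hk⟩ := hprim.eq_pow_of_pow_eq_one (ξ := σ (d n) / d n) (by
      obtain ⟨a, ha⟩ := hd0
      rw [div_pow, ← map_pow, pow_prime_pow_eq_zeroth hd, ← ha, AlgEquiv.commutes, div_self]
      rwa [ha])
    exact ⟨k, by rw [map_pow, hk, div_mul_cancel₀ _ (hne n)]⟩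
  choose k hk using hk
  have hcompat : ∀ n, (p : ℤ) ^ n ∣ (k (n + 1) : ℤ) - k n := by
    intro n
    have h1 := congrArg (· ^ p) (hk (n + 1))
    simp only [mul_pow, ← map_pow, hd, hk n] at h1
    have h2 := mul_right_cancel₀ (hne n) h1
    have h3 := (algebraMap F L).injective h2
    rw [← pow_mul, mul_comm, pow_mul, hζp, pow_eq_pow_iff_natCast_zmod hζ] at h3
    rw [← Nat.cast_pow, ← ZMod.intCast_zmod_eq_zero_iff_dvd]
    push_cast
    rw [h3, sub_self]
  refine ⟨PadicInt.ofIntSeq _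
    (PadicInt.isCauSeq_padicNorm_of_pow_dvd_sub (fun n => (k n : ℤ)) p hcompat), fun n l hl => ?_⟩
  rw [PadicInt.toZModPow_ofIntSeq_of_pow_dvd_sub _ p hcompat, Int.cast_natCast,
    ← pow_eq_pow_iff_natCast_zmod hζ] at hl
  rw [hk, hl]

theorem IsKummerExponent.unique (hζ : ∀ n, IsPrimitiveRoot (ζ n) (p ^ n))
    (hd : ∀ n, d n ≠ 0) {σ : L ≃ₐ[F] L} {x y : ℤ_[p]} (hx : IsKummerExponent ζ d σ x)
    (hy : IsKummerExponent ζ d σ y) : x = y := by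
  refine PadicInt.ext_of_toZModPow.mp fun n => ?_
  have : NeZero (p ^ n) := ⟨pow_ne_zero _ (Fact.out : p.Prime).ne_zero⟩
  have h1 := hx n _ (ZMod.natCast_zmod_val _).symm
  rw [hy n _ (ZMod.natCast_zmod_val _).symm] at h1
  have h2 := (algebraMap F L).injective (mul_right_cancel₀ (hd n) h1)
  rw [pow_eq_pow_iff_natCast_zmod hζ, ZMod.natCast_zmod_val, ZMod.natCast_zmod_val] at h2
  exact h2.symm

theorem IsKummerExponent.mul (hζ : ∀ n, IsPrimitiveRoot (ζ n) (p ^ n)) {σ τ : L ≃ₐ[F] L}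
    {x y : ℤ_[p]} (hx : IsKummerExponent ζ d σ x) (hy : IsKummerExponent ζ d τ y) :
    IsKummerExponent ζ d (σ * τ) (x + y) := by
  intro n k hk
  have : NeZero (p ^ n) := ⟨pow_ne_zero _ (Fact.out : p.Prime).ne_zero⟩
  have h1 := hx n _ (ZMod.natCast_zmod_val _).symm
  have h2 := hy n _ (ZMod.natCast_zmod_val _).symm
  rw [← (pow_eq_pow_iff_natCast_zmod hζ n
    ((PadicInt.toZModPow n x).val + (PadicInt.toZModPow n y).val) k).mpr
    (by rw [← hk, map_add]; simp), AlgEquiv.mul_apply, h2, map_mul, AlgEquiv.commutes, h1,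
    pow_add, map_mul]
  ring

theorem isKummerExponent_zero_iff (hζ : ∀ n, IsPrimitiveRoot (ζ n) (p ^ n)) {σ : L ≃ₐ[F] L} :
    IsKummerExponent ζ d σ (0 : ℤ_[p]) ↔ ∀ n, σ (d n) = d n := by
  refine ⟨fun h n => by simpa using h n 0 (by simp), fun h n k hk => ?_⟩
  rw [h n, ← (pow_eq_pow_iff_natCast_zmod hζ n 0 k).mpr (by rw [← hk]; simp)]
  simp

/-- The Kummer cocycle of a compatible system of `p`-power roots is a continuous
homomorphism. -/
theorem exists_continuous_kummerHom [Algebra.IsIntegral F L]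
    (hζ : ∀ n, IsPrimitiveRoot (ζ n) (p ^ n))
    (hζp : ∀ n, ζ (n + 1) ^ p = ζ n) (hd : ∀ n, d (n + 1) ^ p = d n) (h0 : d 0 ≠ 0)
    (hd0 : d 0 ∈ (algebraMap F L).range) :
    ∃ f : (L ≃ₐ[F] L) →* Multiplicative ℤ_[p], Continuous f ∧
      ∀ σ, f σ = 1 → ∀ n, σ (d n) = d n := by
  have hne := ne_zero_of_pow_prime_eq hd h0
  choose c hc using exists_isKummerExponent (p := p) hζ hζp hd h0 hd0
  let f : (L ≃ₐ[F] L) →* Multiplicative ℤ_[p] :=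
    MonoidHom.mk' (fun σ => Multiplicative.ofAdd (c σ)) fun σ τ => by
      rw [← ofAdd_add]
      exact congrArg _ ((hc _).unique hζ hne ((hc σ).mul hζ (hc τ)))
  refine ⟨f, ?_, fun σ hσ => ?_⟩
  · have hcont : ContinuousAt c 1 := by
      have hc1 : c 1 = 0 := (hc 1).unique hζ hne
        ((isKummerExponent_zero_iff hζ).mpr fun n => rfl)
      rw [Metric.continuousAt_iff']
      intro ε hε
      obtain ⟨n, hn⟩ := PadicInt.exists_pow_neg_lt p hε
      have hopen := stabilizer_isOpen_of_isIntegral (K := F) (d n)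
      filter_upwards [hopen.mem_nhds (one_mem _)] with σ hσ
      have hσ' : σ (d n) = d n := hσ
      have : NeZero (p ^ n) := ⟨pow_ne_zero _ (Fact.out : p.Prime).ne_zero⟩
      have h1 := hc σ n _ (ZMod.natCast_zmod_val _).symm
      rw [hσ'] at h1
      have h2 : algebraMap F L (ζ n ^ 0) * d n =
          algebraMap F L (ζ n ^ (PadicInt.toZModPow n (c σ)).val) * d n := by simpa using h1
      have h3 := (algebraMap F L).injective (mul_right_cancel₀ (hne n) h2)
      rw [pow_eq_pow_iff_natCast_zmod hζ, ZMod.natCast_zmod_val, Nat.cast_zero] at h3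
      rw [hc1, dist_zero_right]
      refine lt_of_le_of_lt ?_ hn
      rw [PadicInt.norm_le_pow_iff_mem_span_pow, ← PadicInt.ker_toZModPow, RingHom.mem_ker]
      exact h3.symm
    exact continuous_of_continuousAt_one f (continuous_ofAdd.continuousAt.comp hcont)
  · have h := hc σ
    rw [show c σ = 0 from congrArg Multiplicative.toAdd hσ] at h
    exact (isKummerExponent_zero_iff hζ).mp h

end Kummer

/-- If every `p`-power root of unity is fixed by `σ`, then so is every root of unity having a fixed
`p`-power. -/
theorem apply_eq_self_of_pow_prime_pow_eq {p : ℕ} (hp : p.Prime) {L : Type*} [Field L]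
    (σ : L ≃+* L) (hσ : ∀ (z : L) (n : ℕ), z ^ p ^ n = 1 → σ z = z) {y : L} {n m : ℕ}
    (hm : m ≠ 0) (hy : (y ^ p ^ n) ^ m = 1) (hfix : σ (y ^ p ^ n) = y ^ p ^ n) : σ y = y := by
  obtain ⟨a, m', hpm, rfl⟩ := Nat.exists_eq_pow_mul_and_not_dvd hm p hp.ne_one
  have hy0 : y ≠ 0 := by
    rintro rfl
    rw [zero_pow (pow_ne_zero _ hp.ne_zero), zero_pow hm] at hy
    exact zero_ne_one hy
  have h1 : σ (y ^ m') = y ^ m' := hσ _ (n + a) (by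
    rw [← hy, ← pow_mul, ← pow_mul]
    ring_nf)
  have h2 : (σ y / y) ^ m' = 1 := by
    rw [div_pow, ← map_pow, h1, div_self (pow_ne_zero _ hy0)]
  have h3 : (σ y / y) ^ p ^ n = 1 := by
    rw [div_pow, ← map_pow, hfix, div_self (pow_ne_zero _ hy0)]
  have hco : Nat.Coprime m' (p ^ n) :=
    ((hp.coprime_iff_not_dvd.mpr hpm).pow_left n).symm
  have h4 := orderOf_dvd_of_pow_eq_one h2
  have h5 := orderOf_dvd_of_pow_eq_one h3
  have h6 := orderOf_eq_one_iff.mp (Nat.eq_one_of_dvd_coprimes hco h4 h5)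
  rwa [div_eq_one_iff_eq hy0] at h6

theorem IsAlgClosed.exists_seq_pow_eq {K : Type*} [Field K] [IsAlgClosed K] {p : ℕ} (hp : 0 < p)
    (a : K) : ∃ s : ℕ → K, s 0 = a ∧ ∀ n, s (n + 1) ^ p = s n := by
  choose g hg using fun x : K => IsAlgClosed.exists_pow_nat_eq x hp
  exact ⟨fun n => g^[n] a, rfl, fun n => by
    simp only [Function.iterate_succ_apply', hg]⟩

theorem IsAlgClosed.exists_seq_isPrimitiveRoot {K : Type*} [Field K] [IsAlgClosed K] {p : ℕ}
    (hp : p.Prime) (hpK : (p : K) ≠ 0) :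
    ∃ ζ : ℕ → K, (∀ n, IsPrimitiveRoot (ζ n) (p ^ n)) ∧ ∀ n, ζ (n + 1) ^ p = ζ n := by
  have : NeZero (p : K) := ⟨hpK⟩
  have : NeZero p := ⟨hp.ne_zero⟩
  have : Fact p.Prime := ⟨hp⟩
  obtain ⟨μ, hμ⟩ := HasEnoughRootsOfUnity.exists_primitiveRoot K p
  obtain ⟨s, hs0, hs⟩ := IsAlgClosed.exists_seq_pow_eq hp.pos μ
  refine ⟨fun n => s n ^ p, fun n => ?_, fun n => by simp only [hs]⟩
  have h := pow_prime_pow_eq_zeroth hs n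
  have hord : orderOf (s n) = p ^ (n + 1) := by
    refine orderOf_eq_prime_pow ?_ ?_
    · rw [h, hs0]
      exact hμ.ne_one hp.one_lt
    · rw [pow_succ, pow_mul, h, hs0, hμ.pow_eq_one]
  exact (hord ▸ IsPrimitiveRoot.orderOf (s n)).pow (pow_pos hp.pos _) (pow_succ' p n)

/-- If the torsion-free quotient of `A` is free of rank `r`, then `A` is generated modulo torsion
by `r` elements. -/
theorem CommGroup.exists_generators_mod_torsion {A : Type*} [CommGroup A] {r : ℕ}
    (e : (A ⧸ CommGroup.torsion A) ≃* Multiplicative (Fin r → ℤ)) :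
    ∃ g : Fin r → A, ∀ a : A, ∃ k : Fin r → ℤ, a / ∏ i, g i ^ k i ∈ CommGroup.torsion A := by
  choose g hg using fun i : Fin r =>
    QuotientGroup.mk_surjective (e.symm (Multiplicative.ofAdd (Pi.single i (1 : ℤ))))
  refine ⟨g, fun a => ⟨(e a).toAdd, ?_⟩⟩
  rw [← QuotientGroup.eq_one_iff, QuotientGroup.mk_div, div_eq_one]
  apply e.injective
  rw [← QuotientGroup.mk'_apply _ (∏ i, _), map_prod, map_prod]
  simp only [map_zpow, QuotientGroup.mk'_apply, hg, MulEquiv.apply_symm_apply]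
  apply Multiplicative.toAdd.injective
  rw [toAdd_prod]
  simp only [toAdd_zpow, toAdd_ofAdd]
  ext j
  simp [Finset.sum_apply, Pi.single_apply]

/-- Adjoining all `p`-power roots of a family of elements of the base gives a normal extension. -/
theorem normal_adjoin_prime_pow_roots {F K : Type*} [Field F] [Field K] [Algebra F K]
    [Normal F K] {ι : Type*} (p : ℕ) (a : ι → F) :
    Normal F (IntermediateField.adjoin F
      {x : K | ∃ i, ∃ n : ℕ, x ^ p ^ n = algebraMap F K (a i)}) := by
  rw [IntermediateField.normal_iff_forall_map_le]
  intro σ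
  rw [IntermediateField.adjoin_map]
  refine IntermediateField.adjoin.mono _ _ _ ?_
  rintro _ ⟨x, ⟨i, n, hx⟩, rfl⟩
  exact ⟨i, n, by simp [← map_pow, hx]⟩

/-- Kummer theory for `p`-power roots: the Galois group of an extension `L` of `F` embeds in
`ℤ_p ^ r` when it acts faithfully on `r` compatible systems of `p`-power roots. -/
theorem exists_mulEquiv_padicInt_pi_of_kummer (p : ℕ) [Fact p.Prime] {F L : Type*} [Field F]
    [Field L] [Algebra F L] [IsGalois F L] {r : ℕ} {ζ : ℕ → F} {d : Fin r → ℕ → L}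
    (hζ : ∀ n, IsPrimitiveRoot (ζ n) (p ^ n)) (hζp : ∀ n, ζ (n + 1) ^ p = ζ n)
    (hd : ∀ i n, d i (n + 1) ^ p = d i n) (h0 : ∀ i, d i 0 ≠ 0)
    (hd0 : ∀ i, d i 0 ∈ (algebraMap F L).range)
    (hfaithful : ∀ σ : L ≃ₐ[F] L, (∀ i n, σ (d i n) = d i n) → σ = 1) :
    ∃ k : ℕ, k ≤ r ∧ ∃ φ : (L ≃ₐ[F] L) ≃* Multiplicative (Fin k → ℤ_[p]),
      Continuous φ ∧ Continuous φ.symm := by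
  choose f hf hf1 using fun i =>
    exists_continuous_kummerHom hζ hζp (hd i) (h0 i) (hd0 i)
  let g : (L ≃ₐ[F] L) →* Multiplicative (Fin r → ℤ_[p]) :=
    MonoidHom.mk' (fun σ => Multiplicative.ofAdd fun i => (f i σ).toAdd) fun σ τ => by
      apply Multiplicative.toAdd.injective
      ext i
      simp
  refine exists_mulEquiv_padicInt_pi_of_injective p r g ?_ ?_
  · exact continuous_ofAdd.comp (continuous_pi fun i => continuous_toAdd.comp (hf i))
  · rw [injective_iff_map_eq_one]
    intro σ hσ
    refine hfaithful σ fun i => hf1 i σ ?_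
    exact Multiplicative.toAdd.injective (congrFun (congrArg Multiplicative.toAdd hσ) i)

/-- Let `p` be a prime and `F` a perfect field of characteristic `≠ p`
containing all `p`-power roots of unity, and let `Δ` be a finitely generated subgroup of
`Fˣ` whose free quotient `Δ/Δ_tor` has rank `d₀`.  Then `Gal(F(Δ^{1/p^∞})/F)` is
topologically isomorphic to `ℤ_p^d` for some `d ≤ d₀`. -/
theorem stmt1 (p : ℕ) [Fact p.Prime] (F : Type) [Field F] [PerfectField F]
    (hchar : ringChar F ≠ p)
    (hroots : ∀ (ζ : AlgebraicClosure F) (n : ℕ), ζ ^ p ^ n = 1 →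
      ζ ∈ (algebraMap F (AlgebraicClosure F)).range)
    (Δ : Subgroup Fˣ) (hfg : Group.FG ↥Δ)
    (d₀ : ℕ) (hrank : Nonempty ((↥Δ ⧸ CommGroup.torsion ↥Δ) ≃* Multiplicative (Fin d₀ → ℤ)))
    (E : IntermediateField F (AlgebraicClosure F))
    (hE : E = IntermediateField.adjoin F
      {x : AlgebraicClosure F | ∃ δ : ↥Δ, ∃ n : ℕ,
        x ^ p ^ n = algebraMap F (AlgebraicClosure F) ((δ : Fˣ) : F)}) :
    ∃ d : ℕ, d ≤ d₀ ∧
      ∃ φ : (↥E ≃ₐ[F] ↥E) ≃* Multiplicative (Fin d → ℤ_[p]),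
        Continuous φ ∧ Continuous φ.symm := by
  have hp : p.Prime := Fact.out
  set K := AlgebraicClosure F
  have hpF : (p : F) ≠ 0 := fun h => by
    rcases (Nat.dvd_prime hp).mp (ringChar.dvd h) with h1 | h1
    · exact CharP.ringChar_ne_one h1
    · exact hchar h1
  have hpK : (p : K) ≠ 0 := by
    rw [← map_natCast (algebraMap F K)]
    exact (map_ne_zero _).mpr hpF
  obtain ⟨z, hz, hzp⟩ := IsAlgClosed.exists_seq_isPrimitiveRoot hp hpK
  choose ζ hζ using fun n => hroots (z n) n (hz n).pow_eq_one
  have hζprim : ∀ n, IsPrimitiveRoot (ζ n) (p ^ n) := fun n =>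
    IsPrimitiveRoot.of_map_of_injective (f := algebraMap F K) (by rw [hζ]; exact hz n)
      (algebraMap F K).injective
  have hζp : ∀ n, ζ (n + 1) ^ p = ζ n := fun n =>
    (algebraMap F K).injective (by rw [map_pow, hζ, hζ, hzp])
  obtain ⟨e⟩ := hrank
  obtain ⟨g, hg⟩ := CommGroup.exists_generators_mod_torsion e
  choose s hs0 hs using fun i =>
    IsAlgClosed.exists_seq_pow_eq hp.pos (algebraMap F K ((g i : Fˣ) : F))
  have hspow : ∀ i n, s i n ^ p ^ n = algebraMap F K ((g i : Fˣ) : F) := fun i n => by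
    rw [pow_prime_pow_eq_zeroth (hs i), hs0]
  have hsE : ∀ i n, s i n ∈ E := fun i n => by
    rw [hE]
    exact IntermediateField.subset_adjoin _ _ ⟨g i, n, hspow i n⟩
  have hs_ne : ∀ i n, s i n ≠ 0 := fun i =>
    ne_zero_of_pow_prime_eq (hs i) (by rw [hs0]; simp)
  have hnormal : Normal F E := by
    rw [hE]
    exact normal_adjoin_prime_pow_roots p fun δ : Δ => ((δ : Fˣ) : F)
  have : IsGalois F E := ⟨⟩
  refine exists_mulEquiv_padicInt_pi_of_kummer p (d := fun i n => (⟨s i n, hsE i n⟩ : E))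
    hζprim hζp (fun i n => Subtype.ext (hs i n)) (fun i h => hs_ne i 0 (congrArg Subtype.val h))
    (fun i => ⟨((g i : Fˣ) : F), Subtype.ext (hs0 i).symm⟩) fun σ hσ => ?_
  have hσζ : ∀ (w : E) (n : ℕ), w ^ p ^ n = 1 → σ w = w := fun w n hw => by
    obtain ⟨a, ha⟩ := hroots (w : K) n (by exact_mod_cast congrArg Subtype.val hw)
    rw [show w = algebraMap F E a from Subtype.ext ha.symm, AlgEquiv.commutes]
  have key : (σ : E →ₐ[F] E) = AlgHom.id F E := by
    refine IntermediateField.algHom_ext_of_eq_adjoin F hE ?_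
    rintro x hx
    obtain ⟨δ, n, hδ⟩ := id hx
    obtain ⟨k, hk⟩ := hg δ
    have hxE : x ∈ E := by
      rw [hE]
      exact IntermediateField.subset_adjoin _ _ hx
    let x' : E := ⟨x, hxE⟩
    let t : E := ∏ i, (⟨s i n, hsE i n⟩ : E) ^ k i
    have ht : σ t = t := by simp only [t, map_prod, map_zpow₀, hσ]
    have ht0 : t ≠ 0 := Finset.prod_ne_zero_iff.mpr fun i _ =>
      zpow_ne_zero _ fun h => hs_ne i n (congrArg Subtype.val h)
    have htpow : t ^ p ^ n = algebraMap F E (((∏ i, g i ^ k i : Δ) : Fˣ) : F) := by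
      rw [← Finset.prod_pow]
      rw [SubmonoidClass.coe_finsetProd, Units.coe_prod, map_prod]
      refine Finset.prod_congr rfl fun i _ => ?_
      rw [Subgroup.coe_zpow, Units.val_zpow_eq_zpow_val, map_zpow₀, ← zpow_natCast, zpow_comm, zpow_natCast]
      congr 1
      exact Subtype.ext (hspow i n)
    have hx'pow : x' ^ p ^ n = algebraMap F E ((δ : Fˣ) : F) := Subtype.ext hδ
    have hy : (x' / t) ^ p ^ n = algebraMap F E (((δ / ∏ i, g i ^ k i : Δ) : Fˣ) : F) := by
      rw [div_pow, hx'pow, htpow, ← map_div₀, Subgroup.coe_div, Units.val_div_eq_div_val]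
    obtain ⟨m, hm, hm1⟩ := (isOfFinOrder_iff_pow_eq_one).mp hk
    have hfix : σ (x' / t) = x' / t := by
      refine apply_eq_self_of_pow_prime_pow_eq hp σ.toRingEquiv hσζ (n := n) hm.ne' ?_ ?_
      · rw [hy, ← map_pow, ← Units.val_pow_eq_pow_val, ← Subgroup.coe_pow, hm1]
        simp
      · rw [hy]
        exact σ.commutes _
    rw [map_div₀, ht, div_left_inj' ht0] at hfix
    exact hfix
  exact AlgEquiv.ext fun w => DFunLike.congr_fun key w
end

section
/- Let G be a group, E a field, and V, V' finite dimensional semisimple E-representations of G. Assume char E = 0 or char E > max{dim V, dim V'}. If Tr(σ | V) = Tr(σ | V') for all σ ∈ G, then V and V' are isomorphic as representations. -/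
open Module

section FullyInvariant

variable {R M : Type*} [Ring R] [AddCommGroup M] [Module R M] [IsSemisimpleModule R M]

theorem Submodule.IsFullyInvariant.exists_isCompl {N : Submodule R M} (hN : N.IsFullyInvariant) :
    ∃ K : Submodule R M, K.IsFullyInvariant ∧ IsCompl N K := by
  have : ComplementedLattice (fullyInvariantSubmodule R M) :=
    (OrderIso.setIsotypicComponents (R := R) (M := M)).complementedLattice
  obtain ⟨K, hK⟩ := ComplementedLattice.exists_isCompl
    (⟨N, hN⟩ : fullyInvariantSubmodule R M)
  refine ⟨K, K.2, ?_, ?_⟩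
  · rw [disjoint_iff]
    exact congr_arg Subtype.val (disjoint_iff.mp hK.disjoint)
  · rw [codisjoint_iff]
    exact congr_arg Subtype.val (codisjoint_iff.mp hK.codisjoint)

/-- By the density theorem, the projection onto a fully invariant submodule is the action of
a ring element. -/
theorem Submodule.IsFullyInvariant.exists_smul_isProj [Module.Finite (End R M) M]
    {N : Submodule R M} (hN : N.IsFullyInvariant) :
    ∃ r : R, (∀ x : M, r • x ∈ N) ∧ ∀ x ∈ N, r • x = x := by
  obtain ⟨K, hK, hc⟩ := hN.exists_isCompl
  let p := N.projection K hc
  have hp (f : End R M) (x : M) : p (f x) = f (p x) := by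
    obtain ⟨y, hy, z, hz, rfl⟩ :=
      Submodule.mem_sup.mp (hc.sup_eq_top ▸ Submodule.mem_top : x ∈ N ⊔ K)
    have h₁ : p (f y) = f y := Submodule.projection_apply_left hc ⟨f y, hN f hy⟩
    have h₂ : p y = y := Submodule.projection_apply_left hc ⟨y, hy⟩
    have h₃ : p (f z) = 0 := (Submodule.projection_apply_eq_zero_iff hc).mpr (hK f hz)
    have h₄ : p z = 0 := (Submodule.projection_apply_eq_zero_iff hc).mpr hz
    simp [h₁, h₂, h₃, h₄]
  let q : End (End R M) M :=
    { toFun := p, map_add' := p.map_add, map_smul' := hp }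
  obtain ⟨r, hr⟩ := Module.Finite.toModuleEnd_moduleEnd_surjective (R := R) (M := M) q
  have hr' (x : M) : r • x = p x := LinearMap.congr_fun hr x
  refine ⟨r, fun x ↦ ?_, fun x hx ↦ ?_⟩
  · rw [hr']
    exact Submodule.projection_apply_mem hc x
  · rw [hr']
    exact Submodule.projection_apply_left hc ⟨x, hx⟩

end FullyInvariant

theorem IsSemisimpleModule.prod {R M N : Type*} [Ring R] [AddCommGroup M] [Module R M]
    [AddCommGroup N] [Module R N] [IsSemisimpleModule R M] [IsSemisimpleModule R N] :
    IsSemisimpleModule R (M × N) := by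
  have h : IsSemisimpleModule R
      (LinearMap.range (LinearMap.inl R M N) ⊔ LinearMap.range (LinearMap.inr R M N) :
        Submodule R (M × N)) :=
    .sup (.congr (LinearEquiv.ofInjective _ LinearMap.inl_injective).symm)
      (.congr (LinearEquiv.ofInjective _ LinearMap.inr_injective).symm)
  rw [LinearMap.sup_range_inl_inr] at h
  exact .congr Submodule.topEquiv.symm

theorem Submodule.finiteDimensional_of_isScalarTower (E : Type*) {R M : Type*} [Field E] [Ring R]
    [Algebra E R] [AddCommGroup M] [Module E M] [Module R M] [IsScalarTower E R M]
    [FiniteDimensional E M] (S : Submodule R M) : FiniteDimensional E S :=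
  inferInstanceAs (FiniteDimensional E (S.restrictScalars E))

section Trace

variable {E R M N : Type*} [Field E] [Ring R] [Algebra E R]
  [AddCommGroup M] [Module E M] [Module R M] [IsScalarTower E R M]
  [AddCommGroup N] [Module E N] [Module R N] [IsScalarTower E R N]

theorem LinearEquiv.trace_lsmul (e : M ≃ₗ[R] N) (r : R) :
    LinearMap.trace E M (Algebra.lsmul E E M r) = LinearMap.trace E N (Algebra.lsmul E E N r) := by
  rw [← LinearMap.trace_conj' _ (e.restrictScalars E)]
  congr 1
  ext x
  simp [LinearEquiv.conj_apply]

theorem LinearMap.trace_lsmul_prod [FiniteDimensional E M] [FiniteDimensional E N] (r : R) :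
    LinearMap.trace E (M × N) (Algebra.lsmul E E (M × N) r) =
      LinearMap.trace E M (Algebra.lsmul E E M r) +
        LinearMap.trace E N (Algebra.lsmul E E N r) := by
  rw [← LinearMap.trace_prodMap']
  rfl

variable [FiniteDimensional E M] [FiniteDimensional E N]
  [IsSemisimpleModule R M] [IsSemisimpleModule R N]

/-- A simple submodule of `M` occurs in `N` if the two modules have the same traces. -/
theorem Submodule.exists_linearEquiv_of_trace_eq
    (hM : ∀ k : ℕ, k ≠ 0 → k ≤ finrank E M → (k : E) ≠ 0)
    (htr : ∀ r : R, LinearMap.trace E M (Algebra.lsmul E E M r) =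
      LinearMap.trace E N (Algebra.lsmul E E N r))
    (S : Submodule R M) [IsSimpleModule R S] :
    ∃ T : Submodule R N, Nonempty (S ≃ₗ[R] T) := by
  have : IsSemisimpleModule R (M × N) := .prod
  let c := isotypicComponent R (M × N) S
  have : Module.Finite (End R (M × N)) (M × N) :=
    Module.Finite.of_restrictScalars_finite E _ _
  obtain ⟨r, hr, hr'⟩ :=
    (Submodule.IsFullyInvariant.isotypicComponent R (M × N) S).exists_smul_isProj
  let P := c.comap (LinearMap.inl R M N)
  have hSP : S ≤ P := by
    rw [← Submodule.map_le_iff_le_comap]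
    exact le_sSup ⟨(Submodule.equivMapOfInjective _ LinearMap.inl_injective S).symm⟩
  have hproj : LinearMap.IsProj (P.restrictScalars E) (Algebra.lsmul E E M r) := by
    refine ⟨fun x ↦ ?_, fun x hx ↦ ?_⟩
    · have := hr (x, 0)
      simpa [P, c] using this
    · have := hr' (x, 0) hx
      simpa using congr_arg Prod.fst this
  have hne : LinearMap.trace E M (Algebra.lsmul E E M r) ≠ 0 := by
    rw [hproj.trace]
    refine hM _ ?_ (Submodule.finrank_le _)
    have := IsSimpleModule.nontrivial R S
    obtain ⟨x, hx⟩ := exists_ne (0 : S)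
    intro h0
    have h1 : P.restrictScalars E = ⊥ := Submodule.finrank_eq_zero.mp h0
    have h2 : (x : M) ∈ P.restrictScalars E := hSP x.2
    rw [h1, Submodule.mem_bot] at h2
    exact hx (Subtype.ext h2)
  let Q := c.comap (LinearMap.inr R M N)
  have hQ : Q ≠ ⊥ := by
    intro h
    apply hne
    rw [htr]
    convert map_zero (LinearMap.trace E N)
    ext x
    have h1 : r • x ∈ Q := by
      have := hr (0, x)
      simpa [Q, c] using this
    rw [h, Submodule.mem_bot] at h1
    simpa using h1
  obtain ⟨T, hTQ, hT⟩ := (IsSemisimpleModule.eq_bot_or_exists_simple_le Q).resolve_left hQ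
  refine ⟨T, ?_⟩
  let e := Submodule.equivMapOfInjective (LinearMap.inr R M N) LinearMap.inr_injective T
  have hle : T.map (LinearMap.inr R M N) ≤ c := Submodule.map_le_iff_le_comap.mpr hTQ
  have : IsSimpleModule R (T.map (LinearMap.inr R M N)) := .congr e.symm
  have hc := IsIsotypicOfType.isotypicComponent R (M × N) S
  obtain ⟨f⟩ := isIsotypicOfType_submodule_iff.mp hc _ hle
  exact ⟨f.symm.trans e.symm⟩

end Trace

/-- Finite-dimensional semisimple modules over an algebra are determined by the traces of their
elements if the characteristic is zero or exceeds the dimensions. -/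
theorem IsSemisimpleModule.nonempty_linearEquiv_of_trace_eq {E R : Type*} {M N : Type*} [Field E]
    [Ring R] [Algebra E R]
    [AddCommGroup M] [Module E M] [Module R M] [IsScalarTower E R M]
    [AddCommGroup N] [Module E N] [Module R N] [IsScalarTower E R N]
    [FiniteDimensional E M] [FiniteDimensional E N]
    [IsSemisimpleModule R M] [IsSemisimpleModule R N]
    (hM : ∀ k : ℕ, k ≠ 0 → k ≤ finrank E M → (k : E) ≠ 0)
    (hN : ∀ k : ℕ, k ≠ 0 → k ≤ finrank E N → (k : E) ≠ 0)
    (htr : ∀ r : R, LinearMap.trace E M (Algebra.lsmul E E M r) =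
      LinearMap.trace E N (Algebra.lsmul E E N r)) :
    Nonempty (M ≃ₗ[R] N) := by
  induction hn : finrank E M using Nat.strong_induction_on generalizing M N with
  | _ n ih =>
  rcases subsingleton_or_nontrivial M with hs | hnt
  · have h0 : (finrank E N : E) = 0 := by
      have := htr 1
      rw [map_one (Algebra.lsmul E E M), map_one (Algebra.lsmul E E N), LinearMap.trace_one,
        LinearMap.trace_one, finrank_zero_of_subsingleton] at this
      simpa using this.symm
    have : Subsingleton N := finrank_zero_iff.mp (not_not.mp fun h ↦ hN _ h le_rfl h0)
    exact ⟨0⟩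
  obtain ⟨S, hS⟩ := IsSemisimpleModule.exists_simple_submodule R M
  obtain ⟨T, ⟨e⟩⟩ := S.exists_linearEquiv_of_trace_eq hM htr
  obtain ⟨U, hU⟩ := exists_isCompl S
  obtain ⟨W, hW⟩ := exists_isCompl T
  have := S.finiteDimensional_of_isScalarTower E
  have := U.finiteDimensional_of_isScalarTower E
  have := T.finiteDimensional_of_isScalarTower E
  have := W.finiteDimensional_of_isScalarTower E
  let eM := Submodule.prodEquivOfIsCompl S U hU
  let eN := Submodule.prodEquivOfIsCompl T W hW
  have dM : finrank E S + finrank E U = finrank E M := by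
    rw [← finrank_prod, (eM.restrictScalars E).finrank_eq]
  have dN : finrank E T + finrank E W = finrank E N := by
    rw [← finrank_prod, (eN.restrictScalars E).finrank_eq]
  have hSpos : 0 < finrank E S := by
    have := IsSimpleModule.nontrivial R S
    exact finrank_pos
  obtain ⟨g⟩ := ih (finrank E U) (by omega) (M := U) (N := W)
    (fun k hk hle ↦ hM k hk (by omega)) (fun k hk hle ↦ hN k hk (by omega))
    (fun r ↦ by
      have h := htr r
      rw [← eM.trace_lsmul, ← eN.trace_lsmul, LinearMap.trace_lsmul_prod,
        LinearMap.trace_lsmul_prod, e.trace_lsmul] at h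
      exact add_left_cancel h) rfl
  exact ⟨eM.symm.trans ((e.prodCongr g).trans eN)⟩

theorem Representation.trace_lsmul_asModule {E G V : Type*} [Field E] [Monoid G] [AddCommGroup V]
    [Module E V] (ρ : Representation E G V) (r : MonoidAlgebra E G) :
    LinearMap.trace E ρ.asModule (Algebra.lsmul E E ρ.asModule r) =
      LinearMap.trace E V (ρ.asAlgebraHom r) := by
  rw [← LinearMap.trace_conj' _ ρ.asModuleEquiv]
  congr 1


/-- **trace version of Brauer–Nesbitt.** Let `G` be a group, `E` a field
and `V, V'` finite dimensional semisimple `E`-representations of `G` with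
`char E = 0` or `char E > max (dim V) (dim V')`.  If the traces agree,
`Tr(σ | V) = Tr(σ | V')` for all `σ ∈ G`, then `V ≅ V'` as representations. -/
theorem stmt6 (G : Type) [Group G] (E : Type) [Field E]
    (V : Type) [AddCommGroup V] [Module E V] [FiniteDimensional E V]
    (V' : Type) [AddCommGroup V'] [Module E V'] [FiniteDimensional E V']
    (ρ : Representation E G V) (ρ' : Representation E G V')
    (hss : IsSemisimpleModule (MonoidAlgebra E G) ρ.asModule)
    (hss' : IsSemisimpleModule (MonoidAlgebra E G) ρ'.asModule)
    (hchar : ringChar E = 0 ∨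
      max (Module.finrank E V) (Module.finrank E V') < ringChar E)
    (htr : ∀ σ : G, LinearMap.trace E V (ρ σ) = LinearMap.trace E V' (ρ' σ)) :
    ∃ e : V ≃ₗ[E] V', ∀ (σ : G) (v : V), e (ρ σ v) = ρ' σ (e v) := by
  have hE (k : ℕ) (hk : k ≠ 0) (hle : k ≤ max (finrank E V) (finrank E V')) : (k : E) ≠ 0 := by
    rw [ne_eq, ringChar.spec]
    intro hdvd
    rcases hchar with h0 | hlt
    · rw [h0, zero_dvd_iff] at hdvd
      exact hk hdvd
    · exact absurd (Nat.le_of_dvd (Nat.pos_of_ne_zero hk) hdvd) (by omega)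
  have htr' (r : MonoidAlgebra E G) :
      LinearMap.trace E V (ρ.asAlgebraHom r) = LinearMap.trace E V' (ρ'.asAlgebraHom r) := by
    induction r using MonoidAlgebra.induction_linear with
    | zero => simp
    | add f g hf hg => simp [hf, hg]
    | single g t => simp [Representation.asAlgebraHom_single, htr]
  obtain ⟨e⟩ := IsSemisimpleModule.nonempty_linearEquiv_of_trace_eq (E := E)
    (R := MonoidAlgebra E G) (M := ρ.asModule) (N := ρ'.asModule)
    (fun k hk hle ↦ hE k hk (hle.trans (ρ.asModuleEquiv.finrank_eq.le.trans (le_max_left _ _))))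
    (fun k hk hle ↦ hE k hk (hle.trans (ρ'.asModuleEquiv.finrank_eq.le.trans (le_max_right _ _))))
    (fun r ↦ by rw [ρ.trace_lsmul_asModule, ρ'.trace_lsmul_asModule, htr'])
  refine ⟨ρ.asModuleEquiv.symm.trans ((e.restrictScalars E).trans ρ'.asModuleEquiv), fun σ v ↦ ?_⟩
  change ρ'.asModuleEquiv (e (ρ.asModuleEquiv.symm (ρ σ v))) =
    ρ' σ (ρ'.asModuleEquiv (e (ρ.asModuleEquiv.symm v)))
  rw [ρ.asModuleEquiv_symm_map_rho, map_smul, ρ'.asModuleEquiv_map_smul,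
    Representation.asAlgebraHom_of]
end

section
/- For every positive integer d there is a constant δ_d, depending only on d, such that for every prime p, the composite field Q_p(d)_ab of all abelian extensions of Q_p of degree ≤ d satisfies [Q_p(d)_ab : Q_p] ≤ δ_d. -/
open Polynomial in
theorem Module.End.iSup_eigenspace_eq_top_of_pow_eq_one {K V : Type*} [Field K] [AddCommGroup V]
    [Module K V] {n : ℕ} (hn : 0 < n) {ζ : K} (hζ : IsPrimitiveRoot ζ n) {f : Module.End K V}
    (hf : f ^ n = 1) : ⨆ μ, f.eigenspace μ = ⊤ := by
  classical
  have key (T : Finset K) :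
      LinearMap.ker (aeval f (∏ t ∈ T, (X - C t))) ≤ ⨆ μ, f.eigenspace μ := by
    induction T using Finset.induction_on with
    | empty => simp [Module.End.one_eq_id, LinearMap.ker_id]
    | insert a T ha ih =>
      have hcop : IsCoprime (X - C a) (∏ t ∈ T, (X - C t)) :=
        IsCoprime.prod_right fun t ht ↦
          pairwise_coprime_X_sub_C Function.injective_id fun h ↦ ha (h ▸ ht)
      rw [Finset.prod_insert ha, ← sup_ker_aeval_eq_ker_aeval_mul_of_coprime f hcop]
      refine sup_le ?_ ih
      refine le_trans (le_of_eq ?_) (le_iSup _ a)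
      simp [Module.End.eigenspace_def, Algebra.algebraMap_eq_smul_one]
  refine top_le_iff.mp (le_trans ?_ (key (nthRootsFinset n (1 : K))))
  rw [← X_pow_sub_one_eq_prod hn hζ]
  simp [hf]

/-- Kummer theory: if `K` contains a primitive `n`-th root of unity, then an abelian extension `L`
of `F` of exponent dividing `n` is contained in the field generated over `K` by the `n`-th roots of
elements of `K`. -/
theorem IntermediateField.le_of_forall_pow_mem {F Ω : Type*} [Field F] [CharZero F] [Field Ω]
    [Algebra F Ω] [IsAlgClosure F Ω] {n : ℕ} (hn : 0 < n)
    (K : IntermediateField F Ω) {ζ : K} (hζ : IsPrimitiveRoot ζ n)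
    (L : IntermediateField F Ω) [FiniteDimensional F L] [IsGalois F L]
    (hcomm : ∀ σ τ : L ≃ₐ[F] L, σ * τ = τ * σ) (hexp : ∀ σ : L ≃ₐ[F] L, σ ^ n = 1)
    (E : IntermediateField F Ω) (hKE : K ≤ E) (hE : ∀ x : Ω, x ^ n ∈ K → x ∈ E) : L ≤ E := by
  have : IsAlgClosed Ω := IsAlgClosure.isAlgClosed F
  have : Algebra.IsAlgebraic F Ω := IsAlgClosure.isAlgebraic
  have : Algebra.IsAlgebraic K Ω := Algebra.IsAlgebraic.tower_top (K := F) K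
  have : CharZero K := charZero_of_injective_algebraMap (algebraMap F K).injective
  have : IsAlgClosure K Ω := ⟨inferInstance, inferInstance⟩
  have : Normal K Ω := IsAlgClosure.normal K Ω
  have : IsGalois K Ω := ⟨⟩
  let V : Submodule K Ω := Submodule.span K (L : Set Ω)
  have : FiniteDimensional K V := by
    let b := Module.finBasis F L
    have hV : V = Submodule.span K (Set.range fun i ↦ (b i : Ω)) := by
      refine le_antisymm (Submodule.span_le.mpr fun x hx ↦ ?_) (Submodule.span_mono ?_)
      · have := congrArg (algebraMap L Ω) (b.sum_repr ⟨x, hx⟩)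
        rw [map_sum] at this
        change _ = x at this
        rw [← this]
        refine Submodule.sum_mem _ fun i _ ↦ ?_
        rw [Algebra.smul_def, map_mul, ← IsScalarTower.algebraMap_apply,
          IsScalarTower.algebraMap_apply F K Ω, ← Algebra.smul_def]
        exact Submodule.smul_mem _ _ (Submodule.subset_span ⟨i, rfl⟩)
      · rintro _ ⟨i, rfl⟩
        exact (b i).2
    rw [hV]
    exact FiniteDimensional.span_of_finite K (Set.finite_range _)
  have hres (σ : Ω ≃ₐ[K] Ω) : ∃ τ : L ≃ₐ[F] L, ∀ x : L, σ x = τ x :=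
    ⟨(σ.restrictScalars F).restrictNormal L, fun x ↦
      ((σ.restrictScalars F).restrictNormal_commutes L x).symm⟩
  choose r hr using hres
  have hmaps (σ : Ω ≃ₐ[K] Ω) : ∀ x ∈ V, σ.toLinearMap x ∈ V := fun x hx ↦ by
    induction hx using Submodule.span_induction with
    | mem x hx => exact Submodule.subset_span (by simp [hr σ ⟨x, hx⟩])
    | zero => simp
    | add x y _ _ hx hy => rw [map_add]; exact V.add_mem hx hy
    | smul a x _ hx => rw [map_smul]; exact V.smul_mem a hx
  let f (σ : Ω ≃ₐ[K] Ω) : Module.End K V := σ.toLinearMap.restrict (hmaps σ)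
  have hext (g h : Module.End K V)
      (hgh : ∀ (x : L), g ⟨x, Submodule.subset_span x.2⟩ = h ⟨x, Submodule.subset_span x.2⟩) :
      g = h := by
    ext ⟨x, hx⟩ : 1
    induction hx using Submodule.span_induction with
    | mem x hx => exact hgh ⟨x, hx⟩
    | zero => exact (map_zero g).trans (map_zero h).symm
    | add x y hx hy h1 h2 =>
      exact (map_add g ⟨x, hx⟩ ⟨y, hy⟩).trans
        ((congrArg₂ (· + ·) h1 h2).trans (map_add h ⟨x, hx⟩ ⟨y, hy⟩).symm)
    | smul a x hx h1 =>
      exact (map_smul g a ⟨x, hx⟩).trans ((congrArg (a • ·) h1).trans (map_smul h a ⟨x, hx⟩).symm)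
  have hfL (σ) (x : L) : f σ ⟨x, Submodule.subset_span x.2⟩ =
      ⟨r σ x, Submodule.subset_span (r σ x).2⟩ := Subtype.ext (hr σ x)
  have hfcomm (σ τ) : Commute (f σ) (f τ) := hext _ _ fun x ↦ by
    rw [Module.End.mul_apply, Module.End.mul_apply, hfL, hfL, hfL, hfL]
    congr 2
    exact DFunLike.congr_fun (hcomm (r σ) (r τ)) x
  have hfpow (σ) : f σ ^ n = 1 := hext _ _ fun x ↦ by
    have (m : ℕ) : (f σ ^ m) ⟨x, Submodule.subset_span x.2⟩ =
        ⟨(r σ ^ m) x, Submodule.subset_span ((r σ ^ m) x).2⟩ := by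
      induction m with
      | zero => rfl
      | succ m ih => rw [pow_succ', Module.End.mul_apply, ih, hfL, pow_succ', AlgEquiv.mul_apply]
    rw [this, hexp]
    rfl
  have hss (σ) : (f σ).IsSemisimple := by
    have hn0 : (n : K) ≠ 0 := by exact_mod_cast hn.ne'
    refine Module.End.isSemisimple_of_squarefree_aeval_eq_zero
      (p := Polynomial.X ^ n - Polynomial.C (1 : K)) ?_ (by simp [hfpow])
    exact (Polynomial.separable_X_pow_sub_C (1 : K) hn0 one_ne_zero).squarefree
  have hmax (σ) (μ : K) : (f σ).maxGenEigenspace μ = (f σ).eigenspace μ :=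
    (hss σ).isFinitelySemisimple.maxGenEigenspace_eq_eigenspace μ
  have htop := Module.End.iSup_iInf_maxGenEigenspace_eq_top_of_iSup_maxGenEigenspace_eq_top_of_commute
    f (fun σ τ _ ↦ hfcomm σ τ) fun σ ↦ by
      simp_rw [hmax]; exact Module.End.iSup_eigenspace_eq_top_of_pow_eq_one hn hζ (hfpow σ)
  let EK : Subalgebra K Ω := (IntermediateField.extendScalars hKE).toSubalgebra
  have hle : (⊤ : Submodule K V) ≤ (Subalgebra.toSubmodule EK).comap V.subtype := by
    rw [← htop]
    refine iSup_le fun χ x hx ↦ ?_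
    simp only [hmax, Submodule.mem_iInf, Module.End.mem_eigenspace_iff] at hx
    change (x : Ω) ∈ E
    by_cases hx0 : x = 0
    · simp [hx0]
    refine hE _ ?_
    have hχ (σ) : χ σ ^ n = 1 := by
      have (m : ℕ) : (f σ ^ m) x = χ σ ^ m • x := by
        induction m with
        | zero => simp
        | succ m ih => rw [pow_succ', Module.End.mul_apply, ih, map_smul, hx, smul_smul, pow_succ]
      have := this n
      rw [hfpow, Module.End.one_apply] at this
      exact (smul_left_injective K hx0 (by simpa using this)).symm
    have hfix : ((x : Ω) ^ n) ∈ (⊥ : IntermediateField K Ω) := by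
      rw [InfiniteGalois.mem_bot_iff_fixed]
      intro σ
      have h1 : σ (x : Ω) = χ σ • (x : Ω) := congrArg Subtype.val (hx σ)
      rw [map_pow, h1, smul_pow, hχ, one_smul]
    obtain ⟨y, hy⟩ := IntermediateField.mem_bot.mp hfix
    rw [← hy]
    exact y.2
  intro x hx
  exact hle (x := ⟨x, Submodule.subset_span hx⟩) trivial

section LocalField

open Filter Topology

theorem eventually_exists_eq_pow {K : Type*} [NontriviallyNormedField K] [CompleteSpace K] {n : ℕ}
    (hn : (n : K) ≠ 0) : ∀ᶠ x : K in 𝓝 1, ∃ z, x = z ^ n := by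
  have h := (hasStrictDerivAt_pow n (1 : K)).map_nhds_eq (by simpa using hn)
  rw [one_pow] at h
  rw [← h, eventually_map]
  exact Eventually.of_forall fun z ↦ ⟨z, rfl⟩

/-- The `n`-th powers have finitely many cosets in the multiplicative group of a locally compact
field in which `n` is nonzero. -/
theorem exists_finset_forall_eq_mul_pow {K : Type*} [NontriviallyNormedField K] [ProperSpace K]
    {n : ℕ} (hn : (n : K) ≠ 0) :
    ∃ S : Finset K, ∀ x : K, x ≠ 0 → ∃ s ∈ S, ∃ z, x = s * z ^ n := by
  classical
  have hn0 : n ≠ 0 := by rintro rfl; simp at hn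
  obtain ⟨c, hc⟩ := NormedField.exists_one_lt_norm K
  have hc0 : c ≠ 0 := norm_pos_iff.mp (one_pos.trans hc)
  let C : Set K := Metric.closedBall 0 (‖c‖ ^ n) ∩ {x | 1 ≤ ‖x‖}
  have hC : IsCompact C :=
    (isCompact_closedBall _ _).inter_right (isClosed_le continuous_const continuous_norm)
  have hC0 (x) (hx : x ∈ C) : x ≠ 0 := norm_pos_iff.mp (one_pos.trans_le hx.2)
  obtain ⟨S, hS⟩ := hC.elim_nhds_subcover' (fun s _ ↦ {x | ∃ z, x = s * z ^ n}) fun s hs ↦ by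
    have : Tendsto (fun x ↦ s⁻¹ * x) (𝓝 s) (𝓝 1) := by
      have := (continuous_const_mul s⁻¹).tendsto s
      rwa [inv_mul_cancel₀ (hC0 s hs)] at this
    filter_upwards [this.eventually (eventually_exists_eq_pow hn)] with x ⟨z, hz⟩
    exact ⟨z, by rw [← hz, mul_inv_cancel_left₀ (hC0 s hs)]⟩
  refine ⟨S.image Subtype.val, fun x hx ↦ ?_⟩
  obtain ⟨k, hk1, hk2⟩ := exists_mem_Ico_zpow (norm_pos_iff.mpr hx) (one_lt_pow₀ hc hn0)
  have hk0 : 0 < (‖c‖ ^ n) ^ k := by positivity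
  have hy : x * ((c ^ n) ^ k)⁻¹ ∈ C := by
    refine ⟨?_, ?_⟩
    · rw [mem_closedBall_zero_iff, norm_mul, norm_inv, norm_zpow, norm_pow,
        ← div_eq_mul_inv, div_le_iff₀ hk0, ← zpow_one_add₀ (by positivity), add_comm]
      exact hk2.le
    · change 1 ≤ ‖_‖
      rwa [norm_mul, norm_inv, norm_zpow, norm_pow, ← div_eq_mul_inv, one_le_div₀ hk0]
  obtain ⟨s, hs, z, hz⟩ := Set.mem_iUnion₂.mp (hS hy)
  change _ = (s : K) * z ^ n at hz
  refine ⟨s, Finset.mem_image_of_mem _ hs, z * c ^ k, ?_⟩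
  have : (c ^ n) ^ k = (c ^ k) ^ n := by
    rw [← zpow_natCast, ← zpow_natCast, ← zpow_mul, ← zpow_mul, mul_comm]
  have hck : (c ^ k) ^ n ≠ 0 := by positivity
  rw [mul_pow, ← mul_assoc, ← hz, this, inv_mul_cancel_right₀ hck]

section Tame

open scoped NormedField Valued

variable {K : Type*} [NontriviallyNormedField K] [IsUltrametricDist K]

theorem exists_eq_pow_of_norm_sub_one_lt_one [CompleteSpace K] {p n : ℕ} (hp : p.Prime)
    (hp1 : ‖(p : K)‖ < 1) (hn : (n : K) ≠ 0) (hpn : p.Coprime n) {u : K} (hu : ‖u - 1‖ < 1) :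
    ∃ z, u = z ^ n := by
  set ρ : ℝ := max ‖(p : K)‖ ‖u - 1‖ with hρ
  have hρ0 : 0 ≤ ρ := le_max_of_le_left (norm_nonneg _)
  have hρ1 : ρ < 1 := max_lt hp1 hu
  have step (v : K) (hv : ‖v - 1‖ ≤ ρ) : ‖v ^ p - 1‖ ≤ ρ * ‖v - 1‖ := by
    obtain ⟨r, hr⟩ := exists_add_pow_prime_eq hp (1 : 𝒪[K])
      ⟨v - 1, Valued.integer.mem_iff.mpr (hv.trans hρ1.le)⟩
    have hr' : v ^ p - 1 = (v - 1) ^ p + p * (v - 1) * r := by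
      have := congrArg Subtype.val hr
      simp at this
      rw [this]; ring
    rw [hr']
    refine (IsUltrametricDist.norm_add_le_max _ _).trans (max_le ?_ ?_)
    · obtain ⟨m, rfl⟩ := Nat.exists_eq_add_of_le' hp.two_le
      rw [norm_pow, pow_add, pow_two, ← mul_assoc]
      refine mul_le_mul_of_nonneg_right ?_ (norm_nonneg _)
      have : ‖v - 1‖ ^ m ≤ 1 := pow_le_one₀ (norm_nonneg _) (hv.trans hρ1.le)
      nlinarith [norm_nonneg (v - 1)]
    · rw [norm_mul, norm_mul]
      calc ‖(p : K)‖ * ‖v - 1‖ * ‖(r : K)‖ ≤ ‖(p : K)‖ * ‖v - 1‖ * 1 := by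
            gcongr; exact Valued.integer.mem_iff.mp r.2
        _ ≤ ρ * ‖v - 1‖ := by rw [mul_one]; gcongr; exact le_max_left _ _
  have hbound (k : ℕ) : ‖u ^ p ^ k - 1‖ ≤ ρ ^ (k + 1) := by
    induction k with
    | zero => simp [hρ]
    | succ k ih =>
      rw [pow_succ p, pow_mul]
      calc _ ≤ ρ * ‖u ^ p ^ k - 1‖ :=
            step _ (ih.trans (by simpa using pow_le_pow_of_le_one hρ0 hρ1.le (Nat.le_add_left 1 k)))
        _ ≤ ρ * ρ ^ (k + 1) := by gcongr
        _ = _ := (pow_succ' _ _).symm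
  have hlim : Tendsto (fun k : ℕ ↦ u ^ p ^ k) atTop (𝓝 1) := by
    rw [tendsto_iff_norm_sub_tendsto_zero]
    exact squeeze_zero (fun _ ↦ norm_nonneg _) hbound
      ((tendsto_add_atTop_iff_nat 1).mpr (tendsto_pow_atTop_nhds_zero_of_lt_one hρ0 hρ1))
  obtain ⟨k, z, hz⟩ := (hlim.eventually (eventually_exists_eq_pow hn)).exists
  have hu0 : u ≠ 0 := by rintro rfl; simp at hu
  have hcop : IsCoprime ((p ^ k : ℕ) : ℤ) n := Nat.isCoprime_iff_coprime.mpr (hpn.pow_left k)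
  obtain ⟨a, b, hab⟩ := hcop
  refine ⟨z ^ a * u ^ b, ?_⟩
  calc u = u ^ (a * ((p ^ k : ℕ) : ℤ) + b * n) := by rw [hab, zpow_one]
    _ = (u ^ p ^ k) ^ a * (u ^ b) ^ n := by
      rw [zpow_add₀ hu0, zpow_mul', zpow_natCast, zpow_mul, zpow_natCast]
    _ = (z ^ a * u ^ b) ^ n := by
      rw [hz, mul_pow, ← zpow_natCast (z ^ a), ← zpow_natCast z, ← zpow_mul, ← zpow_mul,
        mul_comm a]

theorem finite_residueField [ProperSpace K] : Finite 𝓀[K] := by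
  obtain ⟨t, ht, hcov⟩ := Metric.totallyBounded_iff.mp
    (isCompact_closedBall (0 : K) 1).totallyBounded 1 one_pos
  have hmem (x : 𝒪[K]) : ∃ a ∈ t, ‖(x : K) - a‖ < 1 := by
    simpa [dist_eq_norm] using hcov (mem_closedBall_zero_iff.mpr (Valued.integer.mem_iff.mp x.2))
  choose a hat ha using hmem
  obtain ⟨r, hr⟩ := IsLocalRing.residue_surjective (R := 𝒪[K]).hasRightInverse
  have := ht.to_subtype
  refine Finite.of_injective (fun b ↦ (⟨a (r b), hat _⟩ : t)) fun b c hbc ↦ ?_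
  have hbc' : a (r b) = a (r c) := congrArg Subtype.val hbc
  rw [← hr b, ← hr c, ← sub_eq_zero, ← map_sub, IsLocalRing.residue_eq_zero_iff,
    IsLocalRing.mem_maximalIdeal, mem_nonunits_iff, Valued.integer.isUnit_iff_norm_eq_one]
  refine ne_of_lt ?_
  change ‖(r b : K) - r c‖ < 1
  rw [← dist_eq_norm]
  refine (IsUltrametricDist.dist_triangle_max _ (a (r b)) _).trans_lt (max_lt ?_ ?_)
  · simpa [dist_eq_norm] using ha (r b)
  · rw [hbc', dist_comm, dist_eq_norm]
    exact ha (r c)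

theorem exists_norm_eq_zpow [ProperSpace K] :
    ∃ π : K, π ≠ 0 ∧ ∀ x : K, x ≠ 0 → ∃ k : ℤ, ‖x‖ = ‖π‖ ^ k := by
  obtain ⟨c, hc0, hc1⟩ := NormedField.exists_norm_lt_one K
  have hcomp : IsCompact (Metric.ball (0 : K) 1) :=
    (isCompact_closedBall (0 : K) 1).of_isClosed_subset (IsUltrametricDist.isClosed_ball _ _)
      Metric.ball_subset_closedBall
  obtain ⟨π, hπ, hmax⟩ := hcomp.exists_isMaxOn ⟨0, by simp⟩ continuous_norm.continuousOn
  have hπ1 : ‖π‖ < 1 := by simpa using hπ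
  have hmax' (x : K) (hx : ‖x‖ < 1) : ‖x‖ ≤ ‖π‖ := hmax (by simpa using hx)
  have hπ0 : 0 < ‖π‖ := hc0.trans_le (hmax' c hc1)
  refine ⟨π, norm_pos_iff.mp hπ0, fun x hx ↦ ?_⟩
  obtain ⟨k, hk1, hk2⟩ := exists_mem_Ico_zpow (norm_pos_iff.mpr hx) (one_lt_inv₀ hπ0 |>.mpr hπ1)
  refine ⟨-k, ?_⟩
  rw [inv_zpow'] at hk1 hk2
  refine le_antisymm ?_ hk1
  by_contra! h
  have h1 : ‖x⁻¹ * π ^ (-k)‖ < 1 := by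
    rw [norm_mul, norm_inv, norm_zpow, inv_mul_lt_one₀ (norm_pos_iff.mpr hx)]; exact h
  have h2 := hmax' _ h1
  rw [norm_mul, norm_inv, norm_zpow, inv_mul_le_iff₀ (norm_pos_iff.mpr hx)] at h2
  have h3 : ‖π‖ ^ (-k) = ‖π‖ ^ (-(k + 1)) * ‖π‖ := by
    rw [← zpow_add_one₀ hπ0.ne']; congr 1; ring
  rw [h3] at h2
  exact absurd (le_of_mul_le_mul_right h2 hπ0) hk2.not_ge

/-- If `n` is prime to the residue characteristic, then the `n`-th powers have at most `n ^ 2` cosets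
in the multiplicative group of a nonarchimedean local field. -/
theorem exists_finset_card_le_forall_eq_mul_pow [ProperSpace K] {p n : ℕ} (hp : p.Prime)
    (hp1 : ‖(p : K)‖ < 1) (hn : (n : K) ≠ 0) (hpn : p.Coprime n) :
    ∃ S : Finset K, S.card ≤ n * n ∧ ∀ x : K, x ≠ 0 → ∃ s ∈ S, ∃ z, x = s * z ^ n := by
  classical
  have hn0 : 0 < n := Nat.pos_of_ne_zero (by rintro rfl; simp at hn)
  obtain ⟨π, hπ0, hπ⟩ := exists_norm_eq_zpow (K := K)
  have : Finite 𝓀[K] := finite_residueField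
  obtain ⟨g, hg⟩ := IsCyclic.exists_generator (α := 𝓀[K]ˣ)
  obtain ⟨y, hy⟩ := IsLocalRing.residue_surjective (g : 𝓀[K])
  have hyu : IsUnit y := (IsLocalRing.residue_ne_zero_iff_isUnit y).mp (hy ▸ g.ne_zero)
  have hy0 : (y : K) ≠ 0 := by simpa using hyu.ne_zero
  have hunit (x : K) (hx : ‖x‖ = 1) : ∃ (i : ℕ) (z : K), x = (y : K) ^ i * z ^ n := by
    let x' : 𝒪[K] := ⟨x, Valued.integer.mem_iff.mpr hx.le⟩
    have hxu : IsUnit x' := Valued.integer.isUnit_iff_norm_eq_one.mpr hx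
    obtain ⟨i, hi⟩ := (mem_powers_iff_mem_zpowers.mpr (hg (Units.map
      (IsLocalRing.residue 𝒪[K]).toMonoidHom hxu.unit)))
    have hi' : IsLocalRing.residue 𝒪[K] (x' - y ^ i) = 0 := by
      have := congrArg Units.val hi
      simp only [Units.val_pow_eq_pow_val] at this
      rw [map_sub, map_pow, hy, this]
      simp
    have hlt : ‖x - (y : K) ^ i‖ < 1 := by
      rw [IsLocalRing.residue_eq_zero_iff, IsLocalRing.mem_maximalIdeal, mem_nonunits_iff,
        Valued.integer.isUnit_iff_norm_eq_one] at hi'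
      exact lt_of_le_of_ne (Valued.integer.norm_le_one (x' - y ^ i)) hi'
    have hyn : ‖(y : K)‖ = 1 := Valued.integer.isUnit_iff_norm_eq_one.mp hyu
    obtain ⟨z, hz⟩ := exists_eq_pow_of_norm_sub_one_lt_one hp hp1 hn hpn
      (u := ((y : K) ^ i)⁻¹ * x) (by
        rw [← inv_mul_cancel₀ (pow_ne_zero i hy0), ← mul_sub, norm_mul, norm_inv, norm_pow, hyn]
        simpa using hlt)
    exact ⟨i, z, by rw [← hz, mul_inv_cancel_left₀ (pow_ne_zero i hy0)]⟩
  refine ⟨(Finset.range n ×ˢ Finset.range n).image fun a ↦ π ^ a.1 * (y : K) ^ a.2,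
    Finset.card_image_le.trans (by simp), fun x hx ↦ ?_⟩
  obtain ⟨k, hk⟩ := hπ x hx
  obtain ⟨i, z, hz⟩ := hunit ((π ^ k)⁻¹ * x) (by
    rw [norm_mul, norm_inv, norm_zpow, hk, inv_mul_cancel₀]
    exact zpow_ne_zero _ (norm_ne_zero_iff.mpr hπ0))
  have hnz : (n : ℤ) ≠ 0 := by exact_mod_cast hn0.ne'
  obtain ⟨j, hj⟩ := Int.eq_ofNat_of_zero_le (Int.emod_nonneg k hnz)
  have hjn : j < n := by have := Int.emod_lt_of_pos k (b := n) (by omega); omega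
  refine ⟨_, Finset.mem_image_of_mem _ (a := (j, i % n)) (by simp [hjn, Nat.mod_lt _ hn0]),
    π ^ (k / n) * (y : K) ^ (i / n) * z, ?_⟩
  have hx' : x = π ^ k * ((y : K) ^ i * z ^ n) := by
    rw [← hz, mul_inv_cancel_left₀ (zpow_ne_zero _ hπ0)]
  have h1 : π ^ k = π ^ j * (π ^ (k / n)) ^ n := by
    rw [← zpow_natCast, ← zpow_natCast, ← zpow_mul, ← zpow_add₀ hπ0, ← hj, mul_comm (k / _),
      Int.emod_add_mul_ediv]
  have h2 : (y : K) ^ i = (y : K) ^ (i % n) * ((y : K) ^ (i / n)) ^ n := by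
    rw [← pow_mul, ← pow_add, mul_comm (i / n), Nat.mod_add_div]
  rw [hx', h1, h2]
  ring

end Tame

end LocalField

section Roots

open Polynomial IntermediateField

theorem IntermediateField.finrank_adjoin_simple_le_of_pow_eq {K Ω : Type*} [Field K] [Field Ω]
    [Algebra K Ω] {n : ℕ} (hn : 0 < n) {a : K} {r : Ω} (hr : r ^ n = algebraMap K Ω a) :
    FiniteDimensional K K⟮r⟯ ∧ Module.finrank K K⟮r⟯ ≤ n := by
  have hr_int : IsIntegral K r := .of_pow hn (hr ▸ isIntegral_algebraMap)
  refine ⟨adjoin.finiteDimensional hr_int, ?_⟩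
  rw [adjoin.finrank hr_int, ← natDegree_X_pow_sub_C (n := n) (r := a)]
  exact natDegree_le_of_dvd (minpoly.dvd _ _ (by simp [hr])) (X_pow_sub_C_ne_zero hn a)

theorem IntermediateField.exists_finrank_le_forall_exists_pow_eq {K Ω : Type*} [Field K] [Field Ω]
    [Algebra K Ω] [IsAlgClosed Ω] {n : ℕ} (hn : 0 < n) (S : Finset K) :
    ∃ E : IntermediateField K Ω, FiniteDimensional K E ∧ Module.finrank K E ≤ n ^ S.card ∧
      ∀ s ∈ S, ∃ r ∈ E, r ^ n = algebraMap K Ω s := by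
  classical
  induction S using Finset.induction_on with
  | empty => exact ⟨⊥, inferInstance, by simp, by simp⟩
  | insert a S ha ih =>
    obtain ⟨E, hfin, hle, hS⟩ := ih
    obtain ⟨r, hr⟩ := IsAlgClosed.exists_pow_nat_eq (algebraMap K Ω a) hn
    obtain ⟨hfin', hle'⟩ := finrank_adjoin_simple_le_of_pow_eq hn hr
    refine ⟨E ⊔ K⟮r⟯, inferInstance, ?_, ?_⟩
    · rw [Finset.card_insert_of_notMem ha, pow_succ]
      exact (finrank_sup_le E K⟮r⟯).trans (Nat.mul_le_mul hle hle')
    · intro s hs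
      rcases Finset.mem_insert.mp hs with rfl | hs
      · exact ⟨r, (le_sup_right : K⟮r⟯ ≤ E ⊔ K⟮r⟯) (mem_adjoin_simple_self K r), hr⟩
      · obtain ⟨t, ht, hts⟩ := hS s hs
        exact ⟨t, (le_sup_left : E ≤ E ⊔ K⟮r⟯) ht, hts⟩

theorem IntermediateField.exists_finrank_le_forall_pow_mem {F Ω : Type*} [Field F] [Field Ω]
    [Algebra F Ω] [IsAlgClosed Ω] {n : ℕ} (hn : 0 < n) (K : IntermediateField F Ω)
    [FiniteDimensional F K] {ζ : K} (hζ : IsPrimitiveRoot ζ n) {S : Finset K}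
    (hS : ∀ x : K, x ≠ 0 → ∃ s ∈ S, ∃ z, x = s * z ^ n) :
    ∃ E : IntermediateField F Ω, K ≤ E ∧ FiniteDimensional F E ∧
      Module.finrank F E ≤ Module.finrank F K * n ^ S.card ∧ ∀ x : Ω, x ^ n ∈ K → x ∈ E := by
  obtain ⟨E, hfin, hle, hE⟩ := exists_finrank_le_forall_exists_pow_eq (Ω := Ω) hn S
  have hKE (a : K) : (a : Ω) ∈ E := E.algebraMap_mem a
  have : FiniteDimensional F E := FiniteDimensional.trans F K E
  refine ⟨E.restrictScalars F, fun a ha ↦ hKE ⟨a, ha⟩, this, ?_, fun x hx ↦ ?_⟩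
  · change Module.finrank F E ≤ _
    have : Module.Free K E := Module.Free.of_divisionRing K E
    rw [← Module.finrank_mul_finrank F K E]
    gcongr
  · change x ∈ E
    by_cases hx0 : x = 0
    · simp [hx0]
    obtain ⟨s, hs, z, hz⟩ := hS ⟨x ^ n, hx⟩ fun h ↦
      pow_ne_zero n hx0 (congrArg Subtype.val h)
    obtain ⟨r, hr, hrs⟩ := hE s hs
    have hxn : x ^ n = (r * z) ^ n := by
      rw [mul_pow, hrs]
      exact congrArg Subtype.val hz
    have hrz : r * z ≠ 0 := fun h ↦ by
      rw [h, zero_pow hn.ne'] at hxn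
      exact pow_ne_zero n hx0 hxn
    have : NeZero n := ⟨hn.ne'⟩
    obtain ⟨i, -, hi⟩ := (hζ.map_of_injective (algebraMap K Ω).injective).eq_pow_of_pow_eq_one
      (ξ := x / (r * z)) (by rw [div_pow, hxn, div_self (pow_ne_zero n hrz)])
    rw [← div_mul_cancel₀ x hrz, ← hi]
    exact E.mul_mem (pow_mem (E.algebraMap_mem ζ) i) (E.mul_mem hr (hKE z))

end Roots

section Padic

open IntermediateField

variable (p : ℕ) [Fact p.Prime]

instance PadicAlgCl.isUltrametricDist_intermediateField (K : IntermediateField ℚ_[p] (PadicAlgCl p)) :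
    IsUltrametricDist K :=
  ⟨fun x y z ↦ IsUltrametricDist.dist_triangle_max (x : PadicAlgCl p) y z⟩

theorem PadicAlgCl.properSpace_intermediateField (K : IntermediateField ℚ_[p] (PadicAlgCl p))
    [FiniteDimensional ℚ_[p] K] : ProperSpace K :=
  FiniteDimensional.proper ℚ_[p] K

theorem PadicAlgCl.exists_finset_forall_eq_mul_pow {n : ℕ} (hn : 0 < n)
    (K : IntermediateField ℚ_[p] (PadicAlgCl p)) [FiniteDimensional ℚ_[p] K] :
    ∃ S : Finset K, (p.Coprime n → S.card ≤ n * n) ∧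
      ∀ x : K, x ≠ 0 → ∃ s ∈ S, ∃ z, x = s * z ^ n := by
  have := properSpace_intermediateField p K
  have : CharZero K := charZero_of_injective_algebraMap (algebraMap ℚ_[p] K).injective
  have hn0 : (n : K) ≠ 0 := by exact_mod_cast hn.ne'
  by_cases hpn : p.Coprime n
  · have hp1 : ‖(p : K)‖ < 1 := by
      rw [← map_natCast (algebraMap ℚ_[p] K), norm_algebraMap']
      exact Padic.norm_p_lt_one
    obtain ⟨S, hcard, hS⟩ := exists_finset_card_le_forall_eq_mul_pow Fact.out hp1 hn0 hpn
    exact ⟨S, fun _ ↦ hcard, hS⟩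
  · obtain ⟨S, hS⟩ := _root_.exists_finset_forall_eq_mul_pow hn0
    exact ⟨S, fun h ↦ absurd h hpn, hS⟩

theorem PadicAlgCl.exists_finiteDimensional_forall_abelian_le {n : ℕ} (hn : 0 < n) :
    ∃ E : IntermediateField ℚ_[p] (AlgebraicClosure ℚ_[p]), FiniteDimensional ℚ_[p] E ∧
      (p.Coprime n → Module.finrank ℚ_[p] E ≤ n * n ^ (n * n)) ∧
      ∀ L : IntermediateField ℚ_[p] (AlgebraicClosure ℚ_[p]), FiniteDimensional ℚ_[p] L →
        IsGalois ℚ_[p] L → (∀ σ τ : L ≃ₐ[ℚ_[p]] L, σ * τ = τ * σ) →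
        (∀ σ : L ≃ₐ[ℚ_[p]] L, σ ^ n = 1) → L ≤ E := by
  have : NeZero (n : AlgebraicClosure ℚ_[p]) := ⟨by exact_mod_cast hn.ne'⟩
  obtain ⟨ζ, hζ⟩ := HasEnoughRootsOfUnity.exists_primitiveRoot (AlgebraicClosure ℚ_[p]) n
  obtain ⟨hfin, hle⟩ := finrank_adjoin_simple_le_of_pow_eq (K := ℚ_[p]) (a := 1) hn
    (hζ.pow_eq_one.trans (map_one _).symm)
  have hζ' : IsPrimitiveRoot (AdjoinSimple.gen ℚ_[p] ζ) n :=
    .of_map_of_injective (f := algebraMap ℚ_[p]⟮ζ⟯ (AlgebraicClosure ℚ_[p]))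
      (by simpa using hζ) (algebraMap ℚ_[p]⟮ζ⟯ (AlgebraicClosure ℚ_[p])).injective
  obtain ⟨S, hcard, hS⟩ := exists_finset_forall_eq_mul_pow p hn ℚ_[p]⟮ζ⟯
  obtain ⟨E, hKE, hEfin, hEle, hE⟩ := exists_finrank_le_forall_pow_mem hn _ hζ' hS
  refine ⟨E, hEfin, fun hpn ↦ hEle.trans ?_, fun L _ _ hcomm hexp ↦
    le_of_forall_pow_mem hn _ hζ' L hcomm hexp E hKE hE⟩
  exact Nat.mul_le_mul hle (Nat.pow_le_pow_right hn (hcard hpn))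

end Padic

/-- For every positive integer `d` there is a constant `δ_d`, depending
only on `d`, such that for every prime `p` the compositum `ℚ_p(d)_ab` (inside a fixed
algebraic closure of `ℚ_p`) of all abelian extensions of `ℚ_p` of degree `≤ d` is finite
over `ℚ_p` of degree `≤ δ_d`. -/
theorem stmt9 (d : ℕ) (hd : 0 < d) :
    ∃ δ : ℕ, ∀ (p : ℕ) [Fact p.Prime],
      FiniteDimensional ℚ_[p]
        ↥(⨆ L ∈ {L : IntermediateField ℚ_[p] (AlgebraicClosure ℚ_[p]) |
            FiniteDimensional ℚ_[p] ↥L ∧ Module.finrank ℚ_[p] ↥L ≤ d ∧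
            IsGalois ℚ_[p] ↥L ∧ ∀ σ τ : ↥L ≃ₐ[ℚ_[p]] ↥L, σ * τ = τ * σ}, L) ∧
      Module.finrank ℚ_[p]
        ↥(⨆ L ∈ {L : IntermediateField ℚ_[p] (AlgebraicClosure ℚ_[p]) |
            FiniteDimensional ℚ_[p] ↥L ∧ Module.finrank ℚ_[p] ↥L ≤ d ∧
            IsGalois ℚ_[p] ↥L ∧ ∀ σ τ : ↥L ≃ₐ[ℚ_[p]] ↥L, σ * τ = τ * σ}, L) ≤ δ := by
  classical
  choose E hfin hle hmem using fun (p : ℕ) [Fact p.Prime] ↦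
    PadicAlgCl.exists_finiteDimensional_forall_abelian_le p d.factorial_pos
  let g (p : ℕ) : ℕ := if hp : p.Prime then
    have := Fact.mk hp
    Module.finrank ℚ_[p] (E p) else 0
  refine ⟨max (d.factorial * d.factorial ^ (d.factorial * d.factorial))
    ((Finset.range (d + 1)).sup g), fun p hp ↦ ?_⟩
  have hsup : (⨆ L ∈ {L : IntermediateField ℚ_[p] (AlgebraicClosure ℚ_[p]) |
      FiniteDimensional ℚ_[p] ↥L ∧ Module.finrank ℚ_[p] ↥L ≤ d ∧
      IsGalois ℚ_[p] ↥L ∧ ∀ σ τ : ↥L ≃ₐ[ℚ_[p]] ↥L, σ * τ = τ * σ}, L) ≤ E p := by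
    refine iSup₂_le fun L hL ↦ ?_
    obtain ⟨h1, h2, h3, h4⟩ := hL
    refine hmem p L h1 h3 h4 fun σ ↦ ?_
    rw [← orderOf_dvd_iff_pow_eq_one]
    refine (orderOf_dvd_natCard σ).trans (Nat.dvd_factorial Nat.card_pos ?_)
    rwa [IsGalois.card_aut_eq_finrank]
  have hEle : Module.finrank ℚ_[p] (E p) ≤ max
      (d.factorial * d.factorial ^ (d.factorial * d.factorial))
      ((Finset.range (d + 1)).sup g) := by
    by_cases hpd : p ≤ d
    · have : Module.finrank ℚ_[p] (E p) = g p := by simp [g, hp.out]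
      rw [this]
      exact le_max_of_le_right (Finset.le_sup (Finset.mem_range.mpr (by omega)))
    · refine le_max_of_le_left (hle p ?_)
      exact (Nat.coprime_factorial_iff hp.out.ne_one).mpr (by rw [hp.out.minFac_eq]; omega)
  have := hfin p
  exact ⟨FiniteDimensional.of_injective (IntermediateField.inclusion hsup).toLinearMap
      (IntermediateField.inclusion hsup).injective,
    (LinearMap.finrank_le_finrank_of_injective (f := (IntermediateField.inclusion hsup).toLinearMap)
      (IntermediateField.inclusion hsup).injective).trans hEle⟩
end

section
/- Let K be a field of characteristic 0 containing all roots of unity, and let L be a Galois extension of K with L ≠ K̄ (the algebraic closure). Assume K is stably p-×μ-indivisible for some prime p. Then for any subfield M of L over which L is algebraic, the extension K̄/M_div is infinite, where M_div is the field generated over Q by the divisible elements of multiplicative groups of all finite extensions of M; i.e., M is TKND. -/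
/-- The part of the Artin–Schreier theorem needed here: an algebraically closed field of
characteristic zero is not a proper finite extension of a field containing all roots of unity. -/
theorem algebraMap_surjective_of_finiteDimensional_of_isAlgClosed {F Ω : Type*} [Field F]
    [Field Ω] [Algebra F Ω] [CharZero F] [IsAlgClosed Ω] [FiniteDimensional F Ω]
    (hroots : ∀ ζ : Ω, (∃ n : ℕ, 0 < n ∧ ζ ^ n = 1) → ζ ∈ Set.range (algebraMap F Ω)) :
    Function.Surjective (algebraMap F Ω) := by
  by_contra hsurj
  have : CharZero Ω := charZero_of_injective_algebraMap (algebraMap F Ω).injective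
  have : IsAlgClosure F Ω := ⟨inferInstance, inferInstance⟩
  have hcard : Nat.card Gal(Ω/F) ≠ 1 := by
    intro h
    have := (Nat.card_eq_one_iff_unique.mp h).1
    refine hsurj fun x => (IsGalois.mem_range_algebraMap_iff_fixed x).mpr fun f => ?_
    rw [Subsingleton.elim f 1, AlgEquiv.one_apply]
  obtain ⟨q, hq, hdvd⟩ := Nat.exists_prime_and_dvd hcard
  have := Fact.mk hq
  obtain ⟨σ, hσ⟩ := exists_prime_orderOf_dvd_card' q hdvd
  have : NeZero (q : Ω) := ⟨Nat.cast_ne_zero.mpr hq.ne_zero⟩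
  obtain ⟨ζ, hζ⟩ := HasEnoughRootsOfUnity.exists_primitiveRoot Ω q
  obtain ⟨ξ, rfl⟩ := hroots ζ ⟨q, hq.pos, hζ.pow_eq_one⟩
  have hξ : IsPrimitiveRoot ξ q := hζ.of_map_of_injective (algebraMap F Ω).injective
  have hroot : (minpoly F σ.toLinearMap).IsRoot ξ := by
    simp [minpoly_algEquiv_toLinearMap σ (isOfFinOrder_of_finite σ), hσ, hξ.pow_eq_one]
  obtain ⟨v, hv⟩ := (Module.End.hasEigenvalue_of_isRoot hroot).exists_hasEigenvector
  have hσv : σ v = algebraMap F Ω ξ * v := by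
    simpa [Algebra.smul_def] using hv.apply_eq_smul
  obtain ⟨c, rfl⟩ := IsAlgClosed.exists_pow_nat_eq v hq.pos
  have hc : c ≠ 0 := by
    rintro rfl
    exact hv.2 (zero_pow hq.ne_zero)
  have hu : (σ c / c) ^ q = algebraMap F Ω ξ := by
    rw [div_pow, ← map_pow, hσv, mul_div_cancel_right₀ _ (pow_ne_zero _ hc)]
  obtain ⟨w, hw⟩ := hroots (σ c / c)
    ⟨q * q, Nat.mul_pos hq.pos hq.pos, by rw [pow_mul, hu, hζ.pow_eq_one]⟩
  have hσc : σ c = algebraMap F Ω w * c := by rw [hw, div_mul_cancel₀ _ hc]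
  have hiter : ∀ j : ℕ, (σ ^ j) c = algebraMap F Ω w ^ j * c := by
    intro j
    induction j with
    | zero => simp
    | succ j ih => rw [pow_succ', AlgEquiv.mul_apply, ih, map_mul, map_pow, σ.commutes, hσc]; ring
  have hone := hiter q
  rw [← hσ, pow_orderOf_eq_one, hσ, hw, hu, AlgEquiv.one_apply] at hone
  exact hζ.ne_one hq.one_lt (mul_right_cancel₀ hc (hone.symm.trans (one_mul c).symm))

/-- If an element `x` of a finite Galois extension `K'` of `K` is divisible in the multiplicative
group of a field generated by elements of `K'` and of a Galois extension `L` of `K`, then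
`x ∈ L`. -/
theorem mem_of_divisible_of_subset_isGalois {K Ω : Type*} [Field K] [Field Ω] [Algebra K Ω]
    [IsGalois K Ω] {p : ℕ} (hp : 0 < p)
    (hroots : ∀ ζ : Ω, (∃ n : ℕ, 0 < n ∧ ζ ^ n = 1) → ζ ∈ (algebraMap K Ω).range)
    (L K' : IntermediateField K Ω) [IsGalois K L] [IsGalois K K'] [FiniteDimensional K K']
    (hK' : ∀ x ∈ K', x ≠ 0 → (∀ n : ℕ, ∃ y ∈ K', y ^ p ^ n = x) → ∃ m : ℕ, 0 < m ∧ x ^ m = 1)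
    (E : Subfield Ω) (hE : E ≤ Subfield.closure ((L : Set Ω) ∪ K'))
    {x : Ω} (hxK' : x ∈ K') (hx0 : x ≠ 0) (hx : ∀ n : ℕ, 0 < n → ∃ y ∈ E, y ^ n = x) :
    x ∈ L := by
  have hroots_fixed : ∀ (σ : Gal(Ω/K)) (ζ : Ω) (n : ℕ), 0 < n → ζ ^ n = 1 → σ ζ = ζ := by
    intro σ ζ n hn hζ
    obtain ⟨k, rfl⟩ := hroots ζ ⟨n, hn, hζ⟩
    exact σ.commutes k
  have hnormal : ∀ (N : IntermediateField K Ω) [IsGalois K N] (σ : Gal(Ω/K)), ∀ z ∈ N,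
      σ z ∈ N := fun N _ σ z hz =>
    IntermediateField.normal_iff_forall_map_le'.mp inferInstance σ ⟨z, hz, rfl⟩
  have hroot_ne : ∀ {y : Ω} {n : ℕ}, 0 < n → y ^ n = x → y ≠ 0 := by
    rintro y n hn rfl rfl
    exact hx0 (zero_pow hn.ne')
  rw [← InfiniteGalois.fixedField_fixingSubgroup L, IntermediateField.mem_fixedField_iff]
  intro τ hτ
  rw [IntermediateField.mem_fixingSubgroup_iff] at hτ
  have hquot_mem : ∀ y ∈ E, ∀ n : ℕ, 0 < n → y ^ n = x → τ y / y ∈ K' := by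
    intro y hyE n hn hyx
    have hy0 := hroot_ne hn hyx
    rw [← InfiniteGalois.fixedField_fixingSubgroup K', IntermediateField.mem_fixedField_iff]
    intro σ hσ
    rw [IntermediateField.mem_fixingSubgroup_iff] at hσ
    have hcomm : E ≤ ((σ * τ : Gal(Ω/K)) : Ω →+* Ω).eqLocusField
        ((τ * σ : Gal(Ω/K)) : Ω →+* Ω) := by
      refine hE.trans (Subfield.closure_le.mpr ?_)
      rintro z (hz | hz)
      · change σ (τ z) = τ (σ z)
        rw [hτ z hz, hτ _ (hnormal L σ z hz)]
      · change σ (τ z) = τ (σ z)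
        rw [hσ z hz, hσ _ (hnormal K' τ z hz)]
    have hcomm_y : σ (τ y) = τ (σ y) := hcomm hyE
    have hσy : (σ y / y) ^ n = 1 := by
      rw [div_pow, ← map_pow, hyx, hσ x hxK', div_self hx0]
    have hfix := hroots_fixed τ _ n hn hσy
    have hσy0 : σ y ≠ 0 := by simpa using hy0
    have hτy0 : τ y ≠ 0 := by simpa using hy0
    rw [map_div₀] at hfix ⊢
    rw [hcomm_y]
    rw [div_eq_div_iff hτy0 hy0] at hfix
    rw [div_eq_div_iff hσy0 hy0, hfix, mul_comm]
  have hquot_root : ∀ y ∈ E, ∀ r : ℕ, 0 < r → y ^ r = x →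
      ∃ m : ℕ, 0 < m ∧ (τ y / y) ^ m = 1 := by
    intro y hyE r hr hyx
    have hy0 := hroot_ne hr hyx
    refine hK' _ (hquot_mem y hyE r hr hyx) (div_ne_zero (by simpa using hy0) hy0) fun n => ?_
    have hpos : 0 < p ^ n * r := Nat.mul_pos (pow_pos hp n) hr
    obtain ⟨z, hzE, hzx⟩ := hx _ hpos
    refine ⟨τ z / z, hquot_mem z hzE _ hpos hzx, ?_⟩
    have hz0 := hroot_ne hpos hzx
    have hfix : τ (z ^ p ^ n / y) = z ^ p ^ n / y :=
      hroots_fixed τ _ r hr (by rw [div_pow, ← pow_mul, hzx, hyx, div_self hx0])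
    have hτy0 : τ y ≠ 0 := by simpa using hy0
    rw [map_div₀, map_pow, div_eq_div_iff hτy0 hy0] at hfix
    rw [div_pow, div_eq_div_iff (pow_ne_zero _ hz0) hy0, hfix, mul_comm]
  let j := Nat.card Gal(K'/K)
  have hj : 0 < j := Nat.card_pos
  have hτj : ∀ z ∈ E, (τ ^ j) z = z := by
    have hle : E ≤ ((τ ^ j : Gal(Ω/K)) : Ω →+* Ω).eqLocusField (RingHom.id Ω) := by
      refine hE.trans (Subfield.closure_le.mpr ?_)
      rintro z (hz | hz)
      · change (τ ^ j) z = z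
        exact (L.mem_fixingSubgroup_iff _).mp
          (pow_mem ((L.mem_fixingSubgroup_iff τ).mpr hτ) j) z hz
      · change (τ ^ j) z = z
        have hres : AlgEquiv.restrictNormalHom K' (τ ^ j) = 1 := by
          rw [map_pow, pow_card_eq_one']
        simpa [hres] using (AlgEquiv.restrictNormalHom_apply K' (τ ^ j) ⟨z, hz⟩).symm
    exact fun z hz => hle hz
  obtain ⟨y, hyE, hyx⟩ := hx j hj
  have hy0 := hroot_ne hj hyx
  obtain ⟨m, hm, hζ⟩ := hquot_root y hyE j hj hyx
  have hiter : ∀ i : ℕ, (τ ^ i) y = (τ y / y) ^ i * y := by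
    intro i
    induction i with
    | zero => simp
    | succ i ih =>
      rw [pow_succ', AlgEquiv.mul_apply, ih, map_mul, map_pow, hroots_fixed τ _ m hm hζ,
        pow_succ, mul_assoc, div_mul_cancel₀ _ hy0]
  have hone : (τ y / y) ^ j = 1 :=
    mul_right_cancel₀ hy0 (((hiter j).symm.trans (hτj y hyE)).trans (one_mul y).symm)
  change τ x = x
  rw [← hyx, map_pow]
  rwa [div_pow, div_eq_one_iff_eq (pow_ne_zero _ hy0)] at hone


/-- Let `K` be a field of characteristic `0` containing all roots of
unity, and `L ≠ K̄` a Galois extension of `K` inside the algebraic closure `Ω = K̄`.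
Assume `K` is stably `p`-`×μ`-indivisible for some prime `p` (every `p`-divisible
element of the multiplicative group of any finite extension of `K` is a root of unity).
Then for any subfield `M` of `L` over which `L` is algebraic, the extension `K̄/M_div`
is infinite, where `M_div` is the subfield generated over `ℚ` by the divisible elements
of the multiplicative groups of all finite extensions of `M`; i.e. `M` is TKND.

(A finite extension of `M` inside `Ω` is encoded as the subfield generated by `M` and a
finite set of elements algebraic over `M`; "algebraic over the subfield `M`" is encoded
by a nonzero polynomial with coefficients in `M`.) -/
theorem stmt15 (p : ℕ) (hp : p.Prime) (K : Type) [Field K] [CharZero K]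
    (hroots : ∀ ζ : AlgebraicClosure K, (∃ n : ℕ, 0 < n ∧ ζ ^ n = 1) →
      ζ ∈ (algebraMap K (AlgebraicClosure K)).range)
    (hstable : ∀ E : IntermediateField K (AlgebraicClosure K), FiniteDimensional K ↥E →
      ∀ x : AlgebraicClosure K, x ∈ E → x ≠ 0 →
        (∀ n : ℕ, ∃ y ∈ E, y ^ p ^ n = x) → ∃ m : ℕ, 0 < m ∧ x ^ m = 1)
    (L : IntermediateField K (AlgebraicClosure K)) (hGal : IsGalois K ↥L) (hL : L ≠ ⊤)
    (M : Subfield (AlgebraicClosure K)) (hML : (M : Set (AlgebraicClosure K)) ⊆ L)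
    (halg : ∀ x ∈ L, ∃ q : Polynomial (AlgebraicClosure K),
      q ≠ 0 ∧ (∀ i, q.coeff i ∈ M) ∧ q.eval x = 0) :
    ¬ FiniteDimensional
        ↥(Subfield.closure {x : AlgebraicClosure K |
            ∃ E : Subfield (AlgebraicClosure K), M ≤ E ∧
              (∃ s : Finset (AlgebraicClosure K),
                (∀ a ∈ s, ∃ q : Polynomial (AlgebraicClosure K),
                  q ≠ 0 ∧ (∀ i, q.coeff i ∈ M) ∧ q.eval a = 0) ∧
                E = Subfield.closure ((M : Set (AlgebraicClosure K)) ∪ ↑s)) ∧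
              x ∈ E ∧ x ≠ 0 ∧ ∀ n : ℕ, 0 < n → ∃ y ∈ E, y ^ n = x})
        (AlgebraicClosure K) := by
  intro hfin
  set D : Subfield (AlgebraicClosure K) := Subfield.closure _ with hD
  have hDL : D ≤ L.toSubfield := by
    refine Subfield.closure_le.mpr ?_
    rintro x ⟨E, -, ⟨s, -, rfl⟩, -, hx0, hdiv⟩
    have hfinite : ((↑s : Set (AlgebraicClosure K)) ∪ {x}).Finite :=
      s.finite_toSet.union (Set.finite_singleton x)
    have := hfinite.to_subtype
    let K' := FiniteGaloisIntermediateField.adjoin K ((↑s : Set (AlgebraicClosure K)) ∪ {x})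
    have hsub := FiniteGaloisIntermediateField.subset_adjoin K
      ((↑s : Set (AlgebraicClosure K)) ∪ {x})
    exact mem_of_divisible_of_subset_isGalois hp.pos hroots L K'.toIntermediateField
      (hstable K'.toIntermediateField inferInstance) _
      (Subfield.closure_mono (Set.union_subset_union hML
        (Set.subset_union_left.trans hsub))) (hsub (Or.inr rfl)) hx0 hdiv
  let _ : Algebra D L := (Subfield.inclusion hDL).toAlgebra
  have : IsScalarTower D L (AlgebraicClosure K) := IsScalarTower.of_algebraMap_eq fun _ => rfl
  have : FiniteDimensional L (AlgebraicClosure K) := Module.Finite.of_restrictScalars_finite D _ _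
  have hsurj := algebraMap_surjective_of_finiteDimensional_of_isAlgClosed
    (F := L) (Ω := AlgebraicClosure K) fun ζ hζ => by
      obtain ⟨k, rfl⟩ := hroots ζ hζ
      exact ⟨algebraMap K L k, rfl⟩
  refine hL (eq_top_iff.mpr fun x _ => ?_)
  obtain ⟨y, rfl⟩ := hsurj x
  exact y.2
end
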